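/- For z, y ∈ k^×, the formulas defining Ñ_3(z,y) endow the 3-dimensional k-vector space with an H_k-module structure, and the H_k-module Ñ_3(z,y) is simple if and only if y^3 ≠ z. -/

import Mathlib

/-- The defining relations of the affine Hecke algebra of type `A_2` (for `Gl_3`),
on the free algebra on four generators `T = X 0`, `T⁻¹ = X 1`, `S_1 = X 2`, `S_2 = X 3`. -/
inductive HeckeRel (R : Type) [CommRing R] (q : R) :
    FreeAlgebra R (Fin 4) → FreeAlgebra R (Fin 4) → Prop
  | TTinv : HeckeRel R q (FreeAlgebra.ι R 0 * FreeAlgebra.ι R 1) 1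
  | TinvT : HeckeRel R q (FreeAlgebra.ι R 1 * FreeAlgebra.ι R 0) 1
  | quad : HeckeRel R q
      ((FreeAlgebra.ι R 2 + 1) * (FreeAlgebra.ι R 2 - algebraMap R (FreeAlgebra R (Fin 4)) q)) 0
  | T3S1 : HeckeRel R q (FreeAlgebra.ι R 0 ^ 3 * FreeAlgebra.ι R 2)
      (FreeAlgebra.ι R 2 * FreeAlgebra.ι R 0 ^ 3)
  | braid : HeckeRel R q (FreeAlgebra.ι R 2 * FreeAlgebra.ι R 3 * FreeAlgebra.ι R 2)
      (FreeAlgebra.ι R 3 * FreeAlgebra.ι R 2 * FreeAlgebra.ι R 3)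
  | TS2 : HeckeRel R q (FreeAlgebra.ι R 0 * FreeAlgebra.ι R 3)
      (FreeAlgebra.ι R 2 * FreeAlgebra.ι R 0)

/-- The affine Hecke algebra `H_R` with parameter `q ∈ R`. -/
abbrev HeckeAlg (R : Type) [CommRing R] (q : R) := RingQuot (HeckeRel R q)

namespace HeckeAlg

variable (R : Type) [CommRing R] (q : R)

noncomputable def gen (i : Fin 4) : HeckeAlg R q :=
  RingQuot.mkAlgHom R (HeckeRel R q) (FreeAlgebra.ι R i)

noncomputable def T : HeckeAlg R q := gen R q 0
noncomputable def Tinv : HeckeAlg R q := gen R q 1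
noncomputable def S1 : HeckeAlg R q := gen R q 2
noncomputable def S2 : HeckeAlg R q := gen R q 3

theorem T_mul_Tinv : T R q * Tinv R q = 1 := by
  simpa [T, Tinv, gen, map_mul, map_one] using
    RingQuot.mkAlgHom_rel R (HeckeRel.TTinv (R := R) (q := q))

theorem Tinv_mul_T : Tinv R q * T R q = 1 := by
  simpa [T, Tinv, gen, map_mul, map_one] using
    RingQuot.mkAlgHom_rel R (HeckeRel.TinvT (R := R) (q := q))

theorem quad_rel : (S1 R q + 1) * (S1 R q - algebraMap R (HeckeAlg R q) q) = 0 := by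
  simpa [S1, gen, map_mul, map_add, map_sub, map_one, map_zero, AlgHom.commutes] using
    RingQuot.mkAlgHom_rel R (HeckeRel.quad (R := R) (q := q))

theorem T3_mul_S1 : T R q ^ 3 * S1 R q = S1 R q * T R q ^ 3 := by
  simpa [T, S1, gen, map_mul, map_pow] using
    RingQuot.mkAlgHom_rel R (HeckeRel.T3S1 (R := R) (q := q))

theorem braid_rel : S1 R q * S2 R q * S1 R q = S2 R q * S1 R q * S2 R q := by
  simpa [S1, S2, gen, map_mul] using
    RingQuot.mkAlgHom_rel R (HeckeRel.braid (R := R) (q := q))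

theorem T_mul_S2 : T R q * S2 R q = S1 R q * T R q := by
  simpa [T, S1, S2, gen, map_mul] using
    RingQuot.mkAlgHom_rel R (HeckeRel.TS2 (R := R) (q := q))

/-- The canonical (base change) ring homomorphism `H_R → H_S` induced by a ring
homomorphism `R → S` sending the parameter `q` to the parameter `q'`. -/
noncomputable def map {R S : Type} [CommRing R] [CommRing S] (f : R →+* S) (q : R) (q' : S)
    (h : f q = q') : HeckeAlg R q →+* HeckeAlg S q' := by
  subst h
  letI : Algebra R (HeckeAlg S (f q)) :=
    RingHom.toAlgebra' ((algebraMap S (HeckeAlg S (f q))).comp f)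
      (fun c x => by simpa using Algebra.commutes (f c) x)
  refine RingQuot.lift
    ⟨((FreeAlgebra.lift R fun i => gen S (f q) i : _ →ₐ[R] HeckeAlg S (f q)) :
        FreeAlgebra R (Fin 4) →+* HeckeAlg S (f q)), ?_⟩
  have key : ∀ i : Fin 4,
      (FreeAlgebra.lift R fun j => gen S (f q) j) (FreeAlgebra.ι R i) = gen S (f q) i :=
    fun i => FreeAlgebra.lift_ι_apply _ _
  have keyq : (FreeAlgebra.lift R fun j => gen S (f q) j)
      (algebraMap R (FreeAlgebra R (Fin 4)) q) = algebraMap S (HeckeAlg S (f q)) (f q) := by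
    rw [AlgHom.commutes]
    rfl
  intro a b hab
  cases hab with
  | TTinv => simpa [key, T, Tinv] using T_mul_Tinv S (f q)
  | TinvT => simpa [key, T, Tinv] using Tinv_mul_T S (f q)
  | quad => simpa [key, keyq, S1] using quad_rel S (f q)
  | T3S1 => simpa [key, T, S1] using T3_mul_S1 S (f q)
  | braid => simpa [key, S1, S2] using braid_rel S (f q)
  | TS2 => simpa [key, T, S1, S2] using T_mul_S2 S (f q)

/-- `S_1⁻¹ = q⁻¹ (S_1 - q + 1)`, where `qi` is an inverse of `q` in `R`. -/
noncomputable def S1i (qi : R) : HeckeAlg R q :=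
  algebraMap R (HeckeAlg R q) qi * (S1 R q - algebraMap R (HeckeAlg R q) q + 1)

/-- `S_2⁻¹ = q⁻¹ (S_2 - q + 1)`, where `qi` is an inverse of `q` in `R`. -/
noncomputable def S2i (qi : R) : HeckeAlg R q :=
  algebraMap R (HeckeAlg R q) qi * (S2 R q - algebraMap R (HeckeAlg R q) q + 1)

/-- The Bernstein elements `Y_1 = q S_1⁻¹ S_2⁻¹ T`, `Y_2 = S_2⁻¹ T S_1`,
`Y_3 = q⁻¹ T S_1 S_2`, where `qi` is an inverse of `q` in `R`. -/
noncomputable def Y (qi : R) : Fin 3 → HeckeAlg R q :=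
  ![algebraMap R (HeckeAlg R q) q * S1i R q qi * S2i R q qi * T R q,
    S2i R q qi * T R q * S1 R q,
    algebraMap R (HeckeAlg R q) qi * T R q * S1 R q * S2 R q]

end HeckeAlg

noncomputable section

variable (p : ℕ) [Fact p.Prime] (k : Type) [Field k] [IsAlgClosed k] [CharP k p]

/-- `H_k = H ⊗_{ℤ[q]} k` with `q ↦ 0`. -/
abbrev Hk : Type := HeckeAlg k 0

/-- The action of `T` on a `1`-dimensional space: multiplication by `c`. -/
def Tmat1 (c : k) : Module.End k (Fin 1 → k) := Matrix.mulVecLin !![c]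

/-- The action of `T` on the `2`-dimensional space with basis `w, Tw` where
`T(Tw) = -y²w - yTw`. -/
def Tmat2 (y : k) : Module.End k (Fin 2 → k) := Matrix.mulVecLin !![0, -y^2; 1, -y]

/-- The action of `T` on the `3`-dimensional space with basis `v, Tv, T²v` where
`T(T²v) = zv`. -/
def Tmat3 (z : k) : Module.End k (Fin 3 → k) := Matrix.mulVecLin !![0, 0, z; 1, 0, 0; 0, 1, 0]

/-- The action of `T` on the `6`-dimensional space with basis `v, Tv, T²v, w, Tw, T²w`
where `T(T²v) = zv`, `T(T²w) = zw`. -/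
def Tmat6 (z : k) : Module.End k (Fin 6 → k) := Matrix.mulVecLin
  !![0, 0, z, 0, 0, 0;
     1, 0, 0, 0, 0, 0;
     0, 1, 0, 0, 0, 0;
     0, 0, 0, 0, 0, z;
     0, 0, 0, 1, 0, 0;
     0, 0, 0, 0, 1, 0]

/-- The action of `S_1` on `L_6(z,y)`: `S_1v = 0`, `S_1(Tv) = T²w`, `S_1(T²v) = -T²v`,
`S_1w = -w`, `S_1(Tw) = (y/z)T²v`, `S_1(T²w) = -T²w`. -/
def SL6 (z y : k) : Module.End k (Fin 6 → k) := Matrix.mulVecLin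
  !![0, 0, 0,  0,  0,     0;
     0, 0, 0,  0,  0,     0;
     0, 0, -1, 0,  y / z, 0;
     0, 0, 0,  -1, 0,     0;
     0, 0, 0,  0,  0,     0;
     0, 1, 0,  0,  0,     -1]

/-- The action of `S_1` on `L̃_6(z,y)`: as on `L_6(z,y)` except `S_1v = w`, `S_1(Tv) = 0`. -/
def SLt6 (z y : k) : Module.End k (Fin 6 → k) := Matrix.mulVecLin
  !![0, 0, 0,  0,  0,     0;
     0, 0, 0,  0,  0,     0;
     0, 0, -1, 0,  y / z, 0;
     1, 0, 0,  -1, 0,     0;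
     0, 0, 0,  0,  0,     0;
     0, 0, 0,  0,  0,     -1]

/-- The action of `S_1` on `K_6(z,y,y')`: `S_1v = w`, `S_1(Tv) = (y/y')T²w`,
`S_1(T²v) = -T²v`, `S_1w = -w`, `S_1(Tw) = (y'/z)T²v`, `S_1(T²w) = -T²w`. -/
def SK6 (z y y' : k) : Module.End k (Fin 6 → k) := Matrix.mulVecLin
  !![0, 0,      0,  0,  0,      0;
     0, 0,      0,  0,  0,      0;
     0, 0,      -1, 0,  y' / z, 0;
     1, 0,      0,  -1, 0,      0;
     0, 0,      0,  0,  0,      0;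
     0, y / y', 0,  0,  0,      -1]

/-- The action of `S_1` on `M_3(z,y)`: `S_1v = 0`, `S_1(Tv) = y⁻¹T²v`, `S_1(T²v) = -T²v`. -/
def SM3 (y : k) : Module.End k (Fin 3 → k) := Matrix.mulVecLin
  !![0, 0, 0; 0, 0, 0; 0, y⁻¹, -1]

/-- The action of `S_1` on `M̃_3(z,y)`: `S_1v = -v`, `S_1(Tv) = -y⁻¹T²v`, `S_1(T²v) = -T²v`. -/
def SMt3 (y : k) : Module.End k (Fin 3 → k) := Matrix.mulVecLin
  !![-1, 0, 0; 0, 0, 0; 0, -y⁻¹, -1]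

/-- The action of `S_1` on `N_3(z,y)`: `S_1v = -v`, `S_1(Tv) = 0`, `S_1(T²v) = -yTv - T²v`. -/
def SN3 (y : k) : Module.End k (Fin 3 → k) := Matrix.mulVecLin
  !![-1, 0, 0; 0, 0, -y; 0, 0, -1]

/-- The action of `S_1` on `Ñ_3(z,y)`: `S_1v = 0`, `S_1(Tv) = 0`, `S_1(T²v) = yTv - T²v`. -/
def SNt3 (y : k) : Module.End k (Fin 3 → k) := Matrix.mulVecLin
  !![0, 0, 0; 0, 0, y; 0, 0, -1]

/-- The action of `S_1` on `P_3(z)`: `S_1v = 0`, `S_1(Tv) = 0`, `S_1(T²v) = -T²v`. -/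
def SP3 : Module.End k (Fin 3 → k) := Matrix.mulVecLin
  !![0, 0, 0; 0, 0, 0; 0, 0, -1]

/-- The action of `S_1` on `P̃_3(z)`: `S_1v = -v`, `S_1(Tv) = 0`, `S_1(T²v) = -T²v`. -/
def SPt3 : Module.End k (Fin 3 → k) := Matrix.mulVecLin
  !![-1, 0, 0; 0, 0, 0; 0, 0, -1]

/-- The action of `S_1` on `M_2(y)`: `S_1w = -w`, `S_1(Tw) = 0`. -/
def SM2 : Module.End k (Fin 2 → k) := Matrix.mulVecLin !![-1, 0; 0, 0]

/-- The action of `S_1` on `M̃_2(y)`: `S_1w = 0`, `S_1(Tw) = -Tw`. -/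
def SMt2 : Module.End k (Fin 2 → k) := Matrix.mulVecLin !![0, 0; 0, -1]

end

/-!
The image of `S_1` on `Ñ_3(z,y)` is the line spanned by `u = yTv - T²v`. The orbit `u, Tu, T²u`
satisfies `(y² + yT + T²)u = (y³ - z)Tv`. If `y³ ≠ z`, any nonzero submodule contains `u`, hence
`Tv`, hence everything. If `y³ = z`, then `v ↦ 1, Tv ↦ y, T²v ↦ y²` is a surjection onto the
one-dimensional module on which `T` acts by `y` and `S_1` by `0`, and its kernel is a proper nonzero
submodule.
-/

theorem mem_invtSubmodule_of_mul_eq_one {R M : Type*} [Ring R] [AddCommGroup M] [Module R M]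
    [IsArtinian R M] {f g : Module.End R M} (hgf : g * f = 1) {W : Submodule R M}
    (hW : W ∈ f.invtSubmodule) : W ∈ g.invtSubmodule := by
  have g_f (x : M) : g (f x) = x := LinearMap.congr_fun hgf x
  have restrict_injective : Function.Injective (f.restrict hW) := fun x x' h ↦
    Subtype.ext (Function.LeftInverse.injective g_f (congrArg Subtype.val h))
  intro x hx
  obtain ⟨w, hw⟩ := IsArtinian.surjective_of_injective_endomorphism _ restrict_injective ⟨x, hx⟩
  obtain rfl : f w = x := congrArg Subtype.val hw
  simp only [Submodule.mem_comap, g_f, w.2]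

theorem ker_mem_invtSubmodule_of_comp_eq_smul {R M N : Type*} [CommSemiring R] [AddCommMonoid M]
    [AddCommMonoid N] [Module R M] [Module R N] {f : Module.End R M} {l : M →ₗ[R] N} {c : R}
    (h : l ∘ₗ f = c • l) : LinearMap.ker l ∈ f.invtSubmodule := fun x hx ↦ by
  have l_f : l (f x) = c • l x := LinearMap.congr_fun h x
  rw [Submodule.mem_comap, LinearMap.mem_ker, l_f, LinearMap.mem_ker.mp hx, smul_zero]

namespace HeckeAlg

section Lift

variable {R : Type} [CommRing R] {q : R} {A : Type*} [Ring A] [Algebra R A]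

/-- The algebra homomorphism `H_R → A` sending `T` to `t` and `S_1` to `s`. Since
`S_2 = T⁻¹ S_1 T` in `H_R`, it must send `S_2` to `t⁻¹ s t`. -/
noncomputable def lift (t : Aˣ) (s : A) (quad : (s + 1) * (s - algebraMap R A q) = 0)
    (comm : Commute ((t : A) ^ 3) s)
    (braid : s * (↑t⁻¹ * s * t) * s = ↑t⁻¹ * s * t * s * (↑t⁻¹ * s * t)) :
    HeckeAlg R q →ₐ[R] A :=
  RingQuot.liftAlgHom R ⟨FreeAlgebra.lift R ![↑t, ↑t⁻¹, s, ↑t⁻¹ * s * t], by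
    rintro _ _ (_ | _ | _ | _ | _ | _) <;>
      simp only [map_mul, map_add, map_sub, map_pow, map_one, map_zero, AlgHom.commutes,
        FreeAlgebra.lift_ι_apply, Matrix.cons_val]
    case TTinv => exact t.mul_inv
    case TinvT => exact t.inv_mul
    case quad => exact quad
    case T3S1 => exact comm
    case braid => exact braid
    case TS2 => rw [mul_assoc, Units.mul_inv_cancel_left]⟩

variable (t : Aˣ) (s : A) (quad : (s + 1) * (s - algebraMap R A q) = 0)
    (comm : Commute ((t : A) ^ 3) s)
    (braid : s * (↑t⁻¹ * s * t) * s = ↑t⁻¹ * s * t * s * (↑t⁻¹ * s * t))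

theorem lift_T : lift t s quad comm braid (T R q) = t := by
  simp [lift, T, gen]

theorem lift_S1 : lift t s quad comm braid (S1 R q) = s := by
  simp [lift, S1, gen]

end Lift

section Generation

variable (R : Type) [CommRing R] (q : R)

theorem adjoin_range_gen : Algebra.adjoin R (Set.range (gen R q)) = ⊤ := by
  have range_gen : Set.range (gen R q) =
      RingQuot.mkAlgHom R (HeckeRel R q) '' Set.range (FreeAlgebra.ι R) :=
    Set.range_comp _ _
  rw [range_gen, ← AlgHom.map_adjoin, FreeAlgebra.adjoin_range_ι, Algebra.map_top,
    AlgHom.range_eq_top]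
  exact RingQuot.mkAlgHom_surjective R (HeckeRel R q)

theorem S2_eq : S2 R q = Tinv R q * S1 R q * T R q := by
  rw [mul_assoc, ← T_mul_S2, ← mul_assoc, Tinv_mul_T, one_mul]

theorem adjoin_T_Tinv_S1 : Algebra.adjoin R {T R q, Tinv R q, S1 R q} = ⊤ := by
  rw [← top_le_iff, ← adjoin_range_gen, Algebra.adjoin_le_iff, Set.range_subset_iff]
  have T_mem : T R q ∈ Algebra.adjoin R {T R q, Tinv R q, S1 R q} :=
    Algebra.subset_adjoin (by simp)
  have Tinv_mem : Tinv R q ∈ Algebra.adjoin R {T R q, Tinv R q, S1 R q} :=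
    Algebra.subset_adjoin (by simp)
  have S1_mem : S1 R q ∈ Algebra.adjoin R {T R q, Tinv R q, S1 R q} :=
    Algebra.subset_adjoin (by simp)
  have S2_mem : S2 R q ∈ Algebra.adjoin R {T R q, Tinv R q, S1 R q} :=
    S2_eq R q ▸ mul_mem (mul_mem Tinv_mem S1_mem) T_mem
  intro i
  fin_cases i
  exacts [T_mem, Tinv_mem, S1_mem, S2_mem]

end Generation

theorem forall_apply_mem_iff {R : Type} [CommRing R] {q : R} {M : Type*} [AddCommGroup M]
    [Module R M] [IsArtinian R M] (ρ : HeckeAlg R q →ₐ[R] Module.End R M) (W : Submodule R M) :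
    (∀ a, ∀ x ∈ W, ρ a x ∈ W) ↔
      W ∈ (ρ (T R q)).invtSubmodule ∧ W ∈ (ρ (S1 R q)).invtSubmodule := by
  refine ⟨fun h ↦ ⟨h _, h _⟩, fun ⟨hT, hS⟩ a ↦ ?_⟩
  have hTinv : W ∈ (ρ (Tinv R q)).invtSubmodule :=
    mem_invtSubmodule_of_mul_eq_one (by rw [← map_mul, Tinv_mul_T, map_one]) hT
  have ha : a ∈ Algebra.adjoin R {T R q, Tinv R q, S1 R q} :=
    adjoin_T_Tinv_S1 R q ▸ Algebra.mem_top
  induction ha using Algebra.adjoin_induction with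
  | mem a ha =>
    obtain rfl | rfl | rfl := ha
    exacts [hT, hTinv, hS]
  | algebraMap r =>
    intro x hx
    rw [AlgHom.commutes, Module.algebraMap_end_apply]
    exact W.smul_mem r hx
  | add a b _ _ ha hb =>
    intro x hx
    rw [map_add]
    exact W.add_mem (ha x hx) (hb x hx)
  | mul a b _ _ ha hb =>
    intro x hx
    rw [map_mul]
    exact ha _ (hb x hx)

end HeckeAlg

section NTilde3

variable {k : Type} [Field k]

theorem Tmat3_apply (z : k) (x : Fin 3 → k) : Tmat3 k z x = ![z * x 2, x 0, x 1] := by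
  ext i; fin_cases i <;> simp [Tmat3, Matrix.mulVec, dotProduct, Fin.sum_univ_three]

theorem SNt3_apply (y : k) (x : Fin 3 → k) : SNt3 k y x = ![0, y * x 2, -x 2] := by
  ext i; fin_cases i <;> simp [SNt3, Matrix.mulVec, dotProduct, Fin.sum_univ_three]

theorem Tmat3_pow_three (z : k) : Tmat3 k z ^ 3 = algebraMap k _ z := by
  refine LinearMap.ext fun x ↦ funext fun i ↦ ?_
  fin_cases i <;> simp [pow_succ, Tmat3_apply]

theorem SNt3_add_one_mul_self (y : k) : (SNt3 k y + 1) * SNt3 k y = 0 := by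
  refine LinearMap.ext fun x ↦ funext fun i ↦ ?_
  fin_cases i <;> simp [SNt3_apply]

theorem SNt3_mul_Tmat3_sq_mul_SNt3 (z y : k) : SNt3 k y * Tmat3 k z ^ 2 * SNt3 k y = 0 := by
  refine LinearMap.ext fun x ↦ funext fun i ↦ ?_
  fin_cases i <;> simp [pow_two, Tmat3_apply, SNt3_apply]

/-- `Tmat3 k z` as an invertible operator; its inverse is read off from `T³ = z`. -/
noncomputable def Tmat3Unit (z : kˣ) : (Module.End k (Fin 3 → k))ˣ where
  val := Tmat3 k z
  inv := (↑z⁻¹ : k) • Tmat3 k z ^ 2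
  val_inv := by
    rw [mul_smul_comm, ← pow_succ', Tmat3_pow_three, Algebra.algebraMap_eq_smul_one, smul_smul,
      z.inv_mul, one_smul]
  inv_val := by
    rw [smul_mul_assoc, ← pow_succ, Tmat3_pow_three, Algebra.algebraMap_eq_smul_one, smul_smul,
      z.inv_mul, one_smul]

theorem SNt3_mul_conj (z : kˣ) (y : k) :
    SNt3 k y * (↑(Tmat3Unit z)⁻¹ * SNt3 k y * ↑(Tmat3Unit z)) = 0 := by
  have inv_eq : (↑(Tmat3Unit z)⁻¹ : Module.End k (Fin 3 → k)) = (↑z⁻¹ : k) • Tmat3 k z ^ 2 := rfl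
  rw [inv_eq, ← mul_assoc, ← mul_assoc, mul_smul_comm, smul_mul_assoc,
    SNt3_mul_Tmat3_sq_mul_SNt3, smul_zero, zero_mul]

/-- The representation `Ñ_3(z,y)` of `H_k`. -/
noncomputable def nTilde3 (z : kˣ) (y : k) : Hk k →ₐ[k] Module.End k (Fin 3 → k) :=
  HeckeAlg.lift (Tmat3Unit z) (SNt3 k y)
    (by rw [map_zero, sub_zero, SNt3_add_one_mul_self])
    (Tmat3_pow_three (z : k) ▸ Algebra.commute_algebraMap_left _ _)
    -- Both sides vanish, because `S_1 S_2` already acts as zero.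
    (by rw [SNt3_mul_conj, zero_mul, mul_assoc, SNt3_mul_conj, mul_zero])

theorem nTilde3_T (z : kˣ) (y : k) : nTilde3 z y (HeckeAlg.T k 0) = Tmat3 k z :=
  HeckeAlg.lift_T ..

theorem nTilde3_S1 (z : kˣ) (y : k) : nTilde3 z y (HeckeAlg.S1 k 0) = SNt3 k y :=
  HeckeAlg.lift_S1 ..

section Reducible

/-- The functional `v ↦ 1, Tv ↦ y, T²v ↦ y²`. For `z = y³` it is a homomorphism from `Ñ_3(z,y)`
onto the one-dimensional module on which `T` acts by `y` and `S_1` by `0`. -/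
noncomputable def powerFunctional (y : k) : (Fin 3 → k) →ₗ[k] k :=
  Fintype.linearCombination k ![1, y, y ^ 2]

theorem powerFunctional_apply (y : k) (x : Fin 3 → k) :
    powerFunctional y x = x 0 + x 1 * y + x 2 * y ^ 2 := by
  simp [powerFunctional, Fintype.linearCombination_apply, Fin.sum_univ_three]

theorem powerFunctional_comp_Tmat3 (y : k) :
    powerFunctional y ∘ₗ Tmat3 k (y ^ 3) = y • powerFunctional y := by
  refine LinearMap.ext fun x ↦ ?_
  simp only [LinearMap.comp_apply, LinearMap.smul_apply, powerFunctional_apply, Tmat3_apply,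
    Matrix.cons_val, smul_eq_mul]
  ring

theorem powerFunctional_comp_SNt3 (y : k) : powerFunctional y ∘ₗ SNt3 k y = 0 := by
  refine LinearMap.ext fun x ↦ ?_
  simp only [LinearMap.comp_apply, LinearMap.zero_apply, powerFunctional_apply, SNt3_apply,
    Matrix.cons_val]
  ring

theorem ker_powerFunctional_ne_bot (y : k) : LinearMap.ker (powerFunctional y) ≠ ⊥ :=
  LinearMap.ker_ne_bot_of_finrank_lt (by simp)

theorem ker_powerFunctional_ne_top (y : k) : LinearMap.ker (powerFunctional y) ≠ ⊤ := by
  intro h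
  have : powerFunctional y ![1, 0, 0] = 0 := LinearMap.mem_ker.mp (h ▸ Submodule.mem_top)
  simp [powerFunctional_apply] at this

end Reducible

section Irreducible

variable {z y : k} {W : Submodule k (Fin 3 → k)}

theorem exists_mem_apply_two_ne_zero (hT : W ∈ (Tmat3 k z).invtSubmodule) (hW : W ≠ ⊥) :
    ∃ x ∈ W, x 2 ≠ 0 := by
  by_contra! h
  refine hW ((Submodule.eq_bot_iff W).mpr fun x hx ↦ ?_)
  have x_two : x 2 = 0 := h x hx
  have x_one : x 1 = 0 := by simpa [Tmat3_apply] using h _ (hT hx)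
  have x_zero : x 0 = 0 := by simpa [Tmat3_apply] using h _ (hT (hT hx))
  ext i
  fin_cases i
  exacts [x_zero, x_one, x_two]

theorem eq_top_of_mem_of_Tmat3_invariant (hz : z ≠ 0) (hT : W ∈ (Tmat3 k z).invtSubmodule)
    (h : ![0, 1, 0] ∈ W) : W = ⊤ := by
  refine Submodule.eq_top_iff'.mpr fun x ↦ ?_
  have x_eq : x = x 1 • ![0, 1, 0] + x 2 • Tmat3 k z ![0, 1, 0] +
      (x 0 * z⁻¹) • Tmat3 k z (Tmat3 k z ![0, 1, 0]) := by
    ext i; fin_cases i <;> simp [Tmat3_apply, hz]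
  rw [x_eq]
  exact W.add_mem (W.add_mem (W.smul_mem _ h) (W.smul_mem _ (hT h))) (W.smul_mem _ (hT (hT h)))

theorem SNt3_eq_smul (x : Fin 3 → k) : SNt3 k y x = x 2 • ![0, y, -1] := by
  ext i; fin_cases i <;> simp [SNt3_apply, mul_comm]

-- With `u = T(y - T)v`, this is `(y² + yT + T²)(y - T) = y³ - T³ = y³ - z` applied to `Tv`.
theorem sq_smul_add_smul_Tmat3_add_Tmat3_Tmat3 (z y : k) :
    y ^ 2 • ![0, y, -1] + y • Tmat3 k z ![0, y, -1] + Tmat3 k z (Tmat3 k z ![0, y, -1]) =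
      (y ^ 3 - z) • ![0, 1, 0] := by
  ext i; fin_cases i <;> simp [Tmat3_apply] <;> ring

theorem eq_top_of_Tmat3_SNt3_invariant (hz : z ≠ 0) (hyz : y ^ 3 ≠ z)
    (hT : W ∈ (Tmat3 k z).invtSubmodule) (hS : W ∈ (SNt3 k y).invtSubmodule) (hW : W ≠ ⊥) :
    W = ⊤ := by
  obtain ⟨x, hx, hx2⟩ := exists_mem_apply_two_ne_zero hT hW
  have u_mem : ![0, y, -1] ∈ W := (W.smul_mem_iff hx2).mp (SNt3_eq_smul (y := y) x ▸ hS hx)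
  have smul_Tv_mem : (y ^ 3 - z) • ![0, 1, 0] ∈ W :=
    sq_smul_add_smul_Tmat3_add_Tmat3_Tmat3 z y ▸
      W.add_mem (W.add_mem (W.smul_mem _ u_mem) (W.smul_mem _ (hT u_mem))) (hT (hT u_mem))
  exact eq_top_of_mem_of_Tmat3_invariant hz hT
    ((W.smul_mem_iff (sub_ne_zero.mpr hyz)).mp smul_Tv_mem)

end Irreducible

theorem forall_invariant_eq_bot_or_eq_top_iff {z : k} (hz : z ≠ 0) (y : k) :
    (∀ W, W ∈ (Tmat3 k z).invtSubmodule ∧ W ∈ (SNt3 k y).invtSubmodule → W = ⊥ ∨ W = ⊤) ↔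
      y ^ 3 ≠ z := by
  refine ⟨?_, fun hyz W ⟨hT, hS⟩ ↦ or_iff_not_imp_left.mpr
    (eq_top_of_Tmat3_SNt3_invariant hz hyz hT hS)⟩
  rintro h rfl
  have hT : LinearMap.ker (powerFunctional y) ∈ (Tmat3 k (y ^ 3)).invtSubmodule :=
    ker_mem_invtSubmodule_of_comp_eq_smul (powerFunctional_comp_Tmat3 y)
  have hS : LinearMap.ker (powerFunctional y) ∈ (SNt3 k y).invtSubmodule :=
    ker_mem_invtSubmodule_of_comp_eq_smul (c := (0 : k))
      (by rw [powerFunctional_comp_SNt3, zero_smul])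
  exact (h _ ⟨hT, hS⟩).elim (ker_powerFunctional_ne_bot y) (ker_powerFunctional_ne_top y)

end NTilde3

theorem statement16_general (k : Type) [Field k] (z : kˣ) (y : k) :
    ∃ ρ : Hk k →ₐ[k] Module.End k (Fin 3 → k),
      ρ (HeckeAlg.T k 0) = Tmat3 k z ∧ ρ (HeckeAlg.S1 k 0) = SNt3 k y ∧
      ((∀ W : Submodule k (Fin 3 → k), (∀ a : Hk k, ∀ x ∈ W, ρ a x ∈ W) → W = ⊥ ∨ W = ⊤) ↔
        y ^ 3 ≠ (z : k)) := by
  refine ⟨nTilde3 z y, nTilde3_T z y, nTilde3_S1 z y, ?_⟩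
  simp only [HeckeAlg.forall_apply_mem_iff, nTilde3_T, nTilde3_S1]
  exact forall_invariant_eq_bot_or_eq_top_iff z.ne_zero y

/-- For `z, y ∈ k^×`, the formulas defining `Ñ_3(z,y)` endow the `3`-dimensional `k`-vector space with an `H_k`-module structure, and the `H_k`-module `Ñ_3(z,y)` is simple if and only if `y³ ≠ z`. -/
theorem statement16 (p : ℕ) [Fact p.Prime] (k : Type) [Field k] [IsAlgClosed k] [CharP k p]
    (z y : kˣ) :
    ∃ ρ : Hk k →ₐ[k] Module.End k (Fin 3 → k),
      ρ (HeckeAlg.T k 0) = Tmat3 k z ∧ ρ (HeckeAlg.S1 k 0) = SNt3 k y ∧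
      ((∀ W : Submodule k (Fin 3 → k), (∀ a : Hk k, ∀ x ∈ W, ρ a x ∈ W) → W = ⊥ ∨ W = ⊤) ↔ ((y : k) ^ 3 ≠ (z : k))) :=
  statement16_general k z y
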